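/- arXiv:1302.1336 — 2 statements merged into one kernel-verified Lean document; each statement's English description precedes it below -/
import Mathlib

section
/- Proposition 1 (real states and measurements): let P be an n-partite probability distribution with a quantum representation given by an n-partite quantum state ρ on (Π s, ι s) and projections M^s_{a|x}. Then P also has a quantum representation by a state ρ̂ on the doubled spaces (Π s, Fin 2 × ι s) together with projections M̂^s_{a|x} on Fin 2 × ι s, such that ρ̂ and all M̂^s_{a|x} have real entries and are symmetric (equal to their own transpose), P(a₁,…,a_n|x₁,…,x_n) = tr[ρ̂·(⊗_s M̂^s_{a_s|x_s})] for all outcomes and settings, and for every subset m ⊆ Fin n the negativity is preserved: N_m(ρ̂) = N_m(ρ), where on the doubled space the partial transpose T_m exchanges the full (Fin 2 × ι s) coordinates for s ∈ m. -/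
open Matrix
open scoped Kronecker ComplexOrder

/-- Partial transpose on the first tensor factor. -/
def ptA {ιA ιB : Type*} (ρ : Matrix (ιA × ιB) (ιA × ιB) ℂ) : Matrix (ιA × ιB) (ιA × ιB) ℂ :=
  fun p q => ρ (q.1, p.2) (p.1, q.2)

/-- Sum of the absolute values of the negative eigenvalues of a Hermitian matrix
(0 if the matrix is not Hermitian). -/
noncomputable def negEig {ι : Type*} [Fintype ι] [DecidableEq ι] (M : Matrix ι ι ℂ) : ℝ :=
  letI := Classical.dec M.IsHermitian
  if h : M.IsHermitian then ∑ i, max 0 (-(h.eigenvalues i)) else 0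
/-- The 2×2 matrix Y = [[0,1],[-1,0]] (viewed as a complex matrix). -/
noncomputable def Ymat : Matrix (Fin 2) (Fin 2) ℂ := !![0, 1; -1, 0]

/-- The complex 2×2 matrix 1 - iY = [[1,-i],[i,1]]. -/
noncomputable def oneMinusIY : Matrix (Fin 2) (Fin 2) ℂ := !![1, -Complex.I; Complex.I, 1]

/-- Real embedding of an observable: Â = 1 ⊗ A_r + Y ⊗ A_i, as a block matrix
[[A_r, A_i], [-A_i, A_r]] on Fin 2 × ι. -/
noncomputable def obsEmbed {ι : Type*} (A : Matrix ι ι ℂ) :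
    Matrix (Fin 2 × ι) (Fin 2 × ι) ℂ :=
  fun p q => (1 : Matrix (Fin 2) (Fin 2) ℂ) p.1 q.1 * ((A p.2 q.2).re : ℂ)
    + Ymat p.1 q.1 * ((A p.2 q.2).im : ℂ)

/-- Real embedding of an n-partite state: the entry at row (a,i), column (b,j) is
2^(-n) · Re[(∏ s, (1-iY)(a s, b s)) · ρ(i,j)]. -/
noncomputable def stateEmbed {n : ℕ} {ι : Fin n → Type*}
    (ρ : Matrix ((s : Fin n) → ι s) ((s : Fin n) → ι s) ℂ) :
    Matrix ((s : Fin n) → Fin 2 × ι s) ((s : Fin n) → Fin 2 × ι s) ℂ :=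
  fun r c =>
    ((((2 : ℝ) ^ n)⁻¹ *
      ((∏ s, oneMinusIY (r s).1 (c s).1) * ρ (fun s => (r s).2) (fun s => (c s).2)).re : ℝ) : ℂ)

/-- Tensor product of one matrix per party. -/
def npTensor {n : ℕ} {ι : Fin n → Type*} (M : (s : Fin n) → Matrix (ι s) (ι s) ℂ) :
    Matrix ((s : Fin n) → ι s) ((s : Fin n) → ι s) ℂ :=
  fun i j => ∏ s, M s (i s) (j s)

/-- Partial transpose across the bipartition m : exchanges row and column index
at every coordinate s ∈ m. -/
def ptm {n : ℕ} {ι : Fin n → Type*} [DecidableEq (Fin n)] (m : Finset (Fin n))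
    (ρ : Matrix ((s : Fin n) → ι s) ((s : Fin n) → ι s) ℂ) :
    Matrix ((s : Fin n) → ι s) ((s : Fin n) → ι s) ℂ :=
  fun i j => ρ (fun s => if s ∈ m then j s else i s) (fun s => if s ∈ m then i s else j s)

/-!
Put `w = (1, i) / √2`, an eigenvector of `Y`, and let `V` send `v` to `w ⊗ v` party by party. It is
an isometry, the real state is `Re (V ρ Vᴴ)`, and locally an observable `A` becomes
`Â = V A Vᴴ + conj (V A Vᴴ)`. Since `w ⬝ w = 0`, the ranges of `V` and of its conjugate are
orthogonal, so `A ↦ Â` is multiplicative and `Â V = V A`; the latter gives the probabilities.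

Transposing `Fin 2 × ι s` replaces `w` by its conjugate at party `s`. Hence the partial transpose
of the real state is again `Re (V B Vᴴ)` with `B` the partial transpose of `ρ`, which is unitarily
equivalent to `B / 2 ⊕ Bᵀ / 2` up to a zero block and so has the negativity of `B`.
-/

section Negativity

variable {κ τ : Type*} [Fintype κ] [DecidableEq κ] [Fintype τ] [DecidableEq τ]

lemma negEig_eq_sum_roots {A : Matrix κ κ ℂ} (hA : A.IsHermitian) :
    negEig A = (A.charpoly.roots.map fun z => max 0 (-z.re)).sum := by
  simp [negEig, dif_pos hA, hA.roots_charpoly_eq_eigenvalues]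

lemma negEig_diagonal (d : κ → ℝ) :
    negEig (diagonal fun k => (d k : ℂ)) = ∑ k, max 0 (-d k) := by
  have hd : (diagonal fun k => (d k : ℂ)).IsHermitian :=
    isHermitian_diagonal_of_self_adjoint _ (funext fun k => Complex.conj_ofReal (d k))
  rw [negEig_eq_sum_roots hd, charpoly_diagonal,
    Polynomial.roots_prod _ _ (Finset.prod_ne_zero_iff.mpr fun k _ => Polynomial.X_sub_C_ne_zero _)]
  simp

lemma negEig_transpose {A : Matrix κ κ ℂ} (hA : A.IsHermitian) : negEig Aᵀ = negEig A := by
  rw [negEig_eq_sum_roots hA.transpose, negEig_eq_sum_roots hA, charpoly_transpose]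

lemma negEig_fromBlocks_zero {A : Matrix κ κ ℂ} {B : Matrix τ τ ℂ}
    (hA : A.IsHermitian) (hB : B.IsHermitian) :
    negEig (fromBlocks A 0 0 B) = negEig A + negEig B := by
  have hAB : (fromBlocks A 0 0 B).IsHermitian := hA.fromBlocks (by simp) hB
  rw [negEig_eq_sum_roots hAB, negEig_eq_sum_roots hA, negEig_eq_sum_roots hB,
    charpoly_fromBlocks_zero₁₂,
    Polynomial.roots_mul (mul_ne_zero (charpoly_monic A).ne_zero (charpoly_monic B).ne_zero),
    Multiset.map_add, Multiset.sum_add]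

lemma negEig_isometry_conj {A : Matrix τ τ ℂ} (hA : A.IsHermitian) {V : Matrix κ τ ℂ}
    (hV : Vᴴ * V = 1) : negEig (V * A * Vᴴ) = negEig A := by
  have hcharpoly : Polynomial.X ^ Fintype.card τ * (V * A * Vᴴ).charpoly =
      Polynomial.X ^ Fintype.card κ * A.charpoly := by
    rw [Matrix.mul_assoc, charpoly_mul_comm', Matrix.mul_assoc, hV, Matrix.mul_one]
  have hroots := congrArg Polynomial.roots hcharpoly
  have hX (k : ℕ) : (Polynomial.X ^ k : Polynomial ℂ) ≠ 0 := pow_ne_zero k Polynomial.X_ne_zero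
  rw [Polynomial.roots_mul (mul_ne_zero (hX _) (charpoly_monic _).ne_zero),
    Polynomial.roots_mul (mul_ne_zero (hX _) (charpoly_monic _).ne_zero),
    Polynomial.roots_X_pow, Polynomial.roots_X_pow] at hroots
  rw [negEig_eq_sum_roots (isHermitian_mul_mul_conjTranspose V hA), negEig_eq_sum_roots hA]
  simpa [Multiset.map_nsmul, Multiset.sum_nsmul] using
    congrArg (fun S : Multiset ℂ => (S.map fun z => max 0 (-z.re)).sum) hroots

lemma negEig_smul {A : Matrix κ κ ℂ} (hA : A.IsHermitian) {c : ℝ} (hc : 0 ≤ c) :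
    negEig ((c : ℂ) • A) = c * negEig A := by
  set U : Matrix κ κ ℂ := hA.eigenvectorUnitary.1
  have hU : Uᴴ * U = 1 := Unitary.coe_star_mul_self hA.eigenvectorUnitary
  have hspectral : A = U * diagonal (fun k => (hA.eigenvalues k : ℂ)) * Uᴴ :=
    hA.spectral_theorem
  have hsmul : (c : ℂ) • A = U * diagonal (fun k => ((c * hA.eigenvalues k : ℝ) : ℂ)) * Uᴴ := by
    conv_lhs => rw [hspectral]
    rw [← Matrix.smul_mul, ← Matrix.mul_smul, ← diagonal_smul]
    simp [Pi.smul_def]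
  have hdiag : (diagonal fun k => ((c * hA.eigenvalues k : ℝ) : ℂ)).IsHermitian :=
    isHermitian_diagonal_of_self_adjoint _ (funext fun k => Complex.conj_ofReal _)
  rw [hsmul, negEig_isometry_conj hdiag hU, negEig_diagonal, negEig, dif_pos hA, Finset.mul_sum]
  refine Finset.sum_congr rfl fun k _ => ?_
  rw [← mul_neg, mul_max_of_nonneg _ _ hc, mul_zero]

end Negativity

section RealPart

variable {κ τ : Type*}

/-- The entrywise real part of a complex matrix, kept as a complex matrix. -/
noncomputable def rePart (A : Matrix κ τ ℂ) : Matrix κ τ ℂ :=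
  A.map fun z => (z.re : ℂ)

lemma rePart_eq_smul_add (A : Matrix κ τ ℂ) : rePart A = (2⁻¹ : ℂ) • (A + Aᵀᴴ) := by
  ext i j
  simp [rePart, Complex.add_conj]

lemma transpose_eq_of_im_eq_zero {A : Matrix κ κ ℂ} (hA : A.IsHermitian)
    (hre : ∀ i j, (A i j).im = 0) : Aᵀ = A := by
  ext i j
  rw [transpose_apply, ← hA.apply, Complex.star_def, Complex.conj_eq_iff_im.mpr (hre i j)]

lemma rePart_eq_self_of_subsingleton [Subsingleton κ] {A : Matrix κ κ ℂ} (hA : A.IsHermitian) :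
    rePart A = A := by
  ext i j
  obtain rfl := Subsingleton.elim i j
  exact hA.coe_re_apply_self i

lemma rePart_posSemidef [Finite κ] {A : Matrix κ κ ℂ} (hA : A.PosSemidef) :
    (rePart A).PosSemidef := by
  rw [rePart_eq_smul_add, hA.isHermitian.transpose.eq]
  exact (hA.add hA.transpose).smul (by positivity)

lemma trace_rePart_mul [Fintype κ] (A : Matrix κ κ ℂ) {N : Matrix κ κ ℂ}
    (hN : ∀ i j, (N i j).im = 0) : trace (rePart A * N) = ((trace (A * N)).re : ℂ) := by
  simp only [trace, diag_apply, mul_apply, rePart, map_apply, Complex.re_sum, Complex.ofReal_sum]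
  refine Finset.sum_congr rfl fun i _ => Finset.sum_congr rfl fun j _ => ?_
  apply Complex.ext <;> simp [hN]

lemma conj_mul_mul_conjTranspose [Fintype τ] (V : Matrix κ τ ℂ) (A : Matrix τ τ ℂ) :
    (V * A * Vᴴ)ᵀᴴ = Vᵀᴴ * Aᵀᴴ * Vᵀ := by
  have hV : Vᴴᵀᴴ = Vᵀ := by
    ext i j
    simp
  simp [hV, Matrix.mul_assoc]

lemma conjTranspose_mul_conj_eq_zero [Fintype κ] {V : Matrix κ τ ℂ} (hV : Vᵀ * V = 0) :
    Vᴴ * Vᵀᴴ = 0 := by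
  simpa [conjTranspose_mul] using congrArg conjTranspose hV

variable [Fintype κ] [DecidableEq κ] [Fintype τ] [DecidableEq τ]

theorem negEig_rePart_isometry_conj {A : Matrix τ τ ℂ} (hA : A.IsHermitian) {V : Matrix κ τ ℂ}
    (hV : Vᴴ * V = 1) (hVT : Vᵀ * V = 0) : negEig (rePart (V * A * Vᴴ)) = negEig A := by
  set W : Matrix κ (τ ⊕ τ) ℂ := fromCols V Vᵀᴴ
  set D : Matrix (τ ⊕ τ) (τ ⊕ τ) ℂ := fromBlocks A 0 0 Aᵀ
  have hD : D.IsHermitian := hA.fromBlocks (by simp) hA.transpose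
  have hW : Wᴴ * W = 1 := by
    have hconj : Vᵀ * Vᵀᴴ = 1 :=
      calc Vᵀ * Vᵀᴴ = (Vᴴ * V)ᵀ := (transpose_mul Vᴴ V).symm
        _ = 1 := by rw [hV, transpose_one]
    have hWH : Wᴴ = fromRows Vᴴ Vᵀ := by
      simp [W, conjTranspose_fromCols_eq_fromRows_conjTranspose]
    rw [hWH, fromRows_mul_fromCols, hV, hVT, hconj, conjTranspose_mul_conj_eq_zero hVT,
      fromBlocks_one]
  have hdecomp : rePart (V * A * Vᴴ) = ((2⁻¹ : ℝ) : ℂ) • (W * D * Wᴴ) := by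
    rw [rePart_eq_smul_add, conj_mul_mul_conjTranspose, hA.transpose.eq]
    simp [W, D, fromCols_mul_fromBlocks, fromCols_mul_fromRows,
      conjTranspose_fromCols_eq_fromRows_conjTranspose, Matrix.mul_assoc]
  calc negEig (rePart (V * A * Vᴴ))
      = 2⁻¹ * negEig D := by
        rw [hdecomp, negEig_smul (isHermitian_mul_mul_conjTranspose W hD) (by positivity),
          negEig_isometry_conj hD hW]
    _ = 2⁻¹ * (negEig A + negEig A) := by
        rw [negEig_fromBlocks_zero hA hA.transpose, negEig_transpose hA]
    _ = negEig A := by ring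

end RealPart

section PiKronecker

variable {S R : Type*} [Fintype S] {κ τ σ : S → Type*}

/-- The Kronecker product of a family of (possibly rectangular) matrices; for square matrices
over `ℂ` indexed by `Fin n` it is `npTensor`. -/
def piKronecker [CommSemiring R] (M : ∀ s, Matrix (κ s) (τ s) R) :
    Matrix (∀ s, κ s) (∀ s, τ s) R :=
  of fun i j => ∏ s, M s (i s) (j s)

lemma piKronecker_mul [CommSemiring R] [DecidableEq S] [∀ s, Fintype (τ s)]
    (M : ∀ s, Matrix (κ s) (τ s) R) (N : ∀ s, Matrix (τ s) (σ s) R) :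
    piKronecker M * piKronecker N = piKronecker fun s => M s * N s := by
  ext i j
  simp only [piKronecker, mul_apply, of_apply, Fintype.prod_sum, Finset.prod_mul_distrib]

lemma piKronecker_one [CommSemiring R] [∀ s, DecidableEq (κ s)] :
    piKronecker (fun s => (1 : Matrix (κ s) (κ s) R)) = 1 := by
  ext i j
  by_cases h : i = j
  · rw [h, one_apply_eq]
    exact Finset.prod_eq_one fun s _ => one_apply_eq (j s)
  · obtain ⟨s, hs⟩ := Function.ne_iff.mp h
    rw [one_apply_ne h]
    exact Finset.prod_eq_zero (Finset.mem_univ s) (one_apply_ne hs)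

lemma piKronecker_zero [CommSemiring R] [Nonempty S] :
    piKronecker (fun s => (0 : Matrix (κ s) (τ s) R)) = 0 := by
  ext i j
  simp [piKronecker]

lemma piKronecker_transpose [CommSemiring R] (M : ∀ s, Matrix (κ s) (τ s) R) :
    (piKronecker M)ᵀ = piKronecker fun s => (M s)ᵀ := rfl

lemma piKronecker_conjTranspose [CommSemiring R] [StarRing R] (M : ∀ s, Matrix (κ s) (τ s) R) :
    (piKronecker M)ᴴ = piKronecker fun s => (M s)ᴴ := by
  ext i j
  simp [piKronecker, star_prod]

lemma piKronecker_im_eq_zero {M : ∀ s, Matrix (κ s) (τ s) ℂ}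
    (hM : ∀ s i j, (M s i j).im = 0) (i : ∀ s, κ s) (j : ∀ s, τ s) :
    (piKronecker M i j).im = 0 := by
  have hre (s : S) : M s (i s) (j s) = ((M s (i s) (j s)).re : ℂ) :=
    Complex.ext rfl (by simp [hM])
  rw [piKronecker, of_apply, Finset.prod_congr rfl fun s _ => hre s, ← Complex.ofReal_prod,
    Complex.ofReal_im]

end PiKronecker

section VecTensor

variable {α ι R : Type*} [CommSemiring R] [DecidableEq ι]

variable (ι) in
/-- The matrix of the map `v ↦ w ⊗ v`. -/
def vecTensor (w : α → R) : Matrix (α × ι) ι R :=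
  of fun p j => w p.1 * (1 : Matrix ι ι R) p.2 j

lemma vecTensor_transpose_mul [Fintype α] [Fintype ι] (v w : α → R) :
    (vecTensor ι v)ᵀ * vecTensor ι w = (v ⬝ᵥ w) • 1 := by
  ext i j
  simp [vecTensor, mul_apply, Fintype.sum_prod_type, dotProduct, one_apply, eq_comm]

lemma vecTensor_conjTranspose [StarRing R] (w : α → R) :
    (vecTensor ι w)ᴴ = (vecTensor ι (star w))ᵀ := by
  ext i p
  simp [vecTensor, one_apply, apply_ite star]

lemma vecTensor_mul_mul_conjTranspose_apply [Fintype ι] [StarRing R] (w : α → R) (A : Matrix ι ι R)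
    (p q : α × ι) :
    (vecTensor ι w * A * (vecTensor ι w)ᴴ) p q = w p.1 * star (w q.1) * A p.2 q.2 := by
  simp only [vecTensor, one_apply, mul_ite, mul_one, mul_zero, mul_apply, of_apply, ite_mul,
    zero_mul, Finset.sum_ite_eq, Finset.mem_univ, ↓reduceIte, conjTranspose_apply, apply_ite star,
    star_zero]
  ring

end VecTensor

section Doubling

/-- The unit eigenvector `(1, i) / √2` of `Y`, for the eigenvalue `i`; the orthogonal projection
onto its span is `oneMinusIY / 2`. -/
noncomputable def yVec : Fin 2 → ℂ :=
  (√2 : ℂ)⁻¹ • ![1, Complex.I]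

lemma yVec_mul_star (a b : Fin 2) : yVec a * star (yVec b) = 2⁻¹ * oneMinusIY a b := by
  have hnorm : (√2 : ℂ)⁻¹ * (√2 : ℂ)⁻¹ = 2⁻¹ := by
    rw [← mul_inv, ← Complex.ofReal_mul, Real.mul_self_sqrt zero_le_two, Complex.ofReal_ofNat]
  have hentry : ![1, Complex.I] a * star (![1, Complex.I] b) = oneMinusIY a b := by
    fin_cases a <;> fin_cases b <;> simp [oneMinusIY]
  simp only [yVec, Pi.smul_apply, smul_eq_mul, star_mul', star_inv₀, Complex.star_def,
    Complex.conj_ofReal] at hentry ⊢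
  rw [mul_mul_mul_comm, hnorm, hentry]

lemma star_yVec_dotProduct_yVec : star yVec ⬝ᵥ yVec = 1 := by
  rw [dotProduct_comm]
  simp only [dotProduct, Pi.star_apply, yVec_mul_star]
  norm_num [oneMinusIY]

lemma yVec_dotProduct_yVec : yVec ⬝ᵥ yVec = 0 := by
  rw [yVec, smul_dotProduct, dotProduct_smul]
  simp [dotProduct, Fin.sum_univ_two]

end Doubling

section ObsEmbed

variable {ι : Type*}

lemma obsEmbed_im (A : Matrix ι ι ℂ) (p q : Fin 2 × ι) : (obsEmbed A p q).im = 0 := by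
  obtain ⟨a, i⟩ := p
  obtain ⟨b, j⟩ := q
  fin_cases a <;> fin_cases b <;> simp [obsEmbed, Ymat]

lemma obsEmbed_one [DecidableEq ι] : obsEmbed (1 : Matrix ι ι ℂ) = 1 := by
  ext ⟨a, i⟩ ⟨b, j⟩
  by_cases hij : i = j <;> simp [obsEmbed, one_apply, hij]

lemma obsEmbed_sum {O : Type*} [Fintype O] (A : O → Matrix ι ι ℂ) :
    obsEmbed (∑ a, A a) = ∑ a, obsEmbed (A a) := by
  ext p q
  simp [obsEmbed, Matrix.sum_apply, Finset.sum_add_distrib, Finset.mul_sum]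

lemma obsEmbed_isHermitian {A : Matrix ι ι ℂ} (hA : A.IsHermitian) :
    (obsEmbed A).IsHermitian := by
  ext ⟨a, i⟩ ⟨b, j⟩
  rw [conjTranspose_apply]
  simp only [obsEmbed, ← hA.apply i j]
  fin_cases a <;> fin_cases b <;> simp [Ymat]

variable [Fintype ι] [DecidableEq ι]

lemma obsEmbed_eq_add_conj (A : Matrix ι ι ℂ) :
    obsEmbed A = vecTensor ι yVec * A * (vecTensor ι yVec)ᴴ +
      (vecTensor ι yVec * A * (vecTensor ι yVec)ᴴ)ᵀᴴ := by
  ext ⟨a, i⟩ ⟨b, j⟩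
  simp only [Matrix.add_apply, conjTranspose_apply, transpose_apply,
    vecTensor_mul_mul_conjTranspose_apply, yVec_mul_star]
  apply Complex.ext <;> fin_cases a <;> fin_cases b <;>
    simp [obsEmbed, Ymat, oneMinusIY] <;> ring

lemma vecTensor_yVec_isometry : (vecTensor ι yVec)ᴴ * vecTensor ι yVec = 1 := by
  rw [vecTensor_conjTranspose, vecTensor_transpose_mul, star_yVec_dotProduct_yVec, one_smul]

lemma vecTensor_yVec_isotropic : (vecTensor ι yVec)ᵀ * vecTensor ι yVec = 0 := by
  rw [vecTensor_transpose_mul, yVec_dotProduct_yVec, zero_smul]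

lemma obsEmbed_mul_vecTensor (A : Matrix ι ι ℂ) :
    obsEmbed A * vecTensor ι yVec = vecTensor ι yVec * A := by
  rw [obsEmbed_eq_add_conj, conj_mul_mul_conjTranspose]
  simp [Matrix.add_mul, Matrix.mul_assoc, vecTensor_yVec_isometry, vecTensor_yVec_isotropic]

omit [DecidableEq ι] in
lemma obsEmbed_mul (A B : Matrix ι ι ℂ) : obsEmbed (A * B) = obsEmbed A * obsEmbed B := by
  classical
  have hreal : (obsEmbed A)ᵀᴴ = obsEmbed A := by
    ext p q
    exact Complex.conj_eq_iff_im.mpr (obsEmbed_im A p q)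
  calc obsEmbed (A * B)
      = obsEmbed A * (vecTensor ι yVec * B * (vecTensor ι yVec)ᴴ) +
        (obsEmbed A * (vecTensor ι yVec * B * (vecTensor ι yVec)ᴴ))ᵀᴴ := by
        rw [obsEmbed_eq_add_conj (A * B)]
        simp only [← Matrix.mul_assoc, obsEmbed_mul_vecTensor]
    _ = obsEmbed A * obsEmbed B := by
        rw [obsEmbed_eq_add_conj B, Matrix.mul_add, transpose_mul, conjTranspose_mul, hreal]

end ObsEmbed

section StateEmbed

variable {n : ℕ} {ι : Fin n → Type*}

lemma ptm_empty (ρ : Matrix (∀ s, ι s) (∀ s, ι s) ℂ) : ptm ∅ ρ = ρ := by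
  ext i j
  simp [ptm]

lemma ptm_isHermitian (m : Finset (Fin n)) {ρ : Matrix (∀ s, ι s) (∀ s, ι s) ℂ}
    (hρ : ρ.IsHermitian) : (ptm m ρ).IsHermitian := by
  ext i j
  exact hρ.apply _ _

lemma stateEmbed_im (ρ : Matrix (∀ s, ι s) (∀ s, ι s) ℂ) (r c : ∀ s, Fin 2 × ι s) :
    (stateEmbed ρ r c).im = 0 :=
  Complex.ofReal_im _

variable [∀ s, DecidableEq (ι s)]

variable (ι) in
/-- The isometry sending a product vector `⊗ₛ vₛ` to `⊗ₛ (wₛ ⊗ vₛ)`, where `wₛ` is `yVec`, or its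
conjugate if `s ∈ m`. -/
noncomputable def doubling (m : Finset (Fin n)) :
    Matrix (∀ s, Fin 2 × ι s) (∀ s, ι s) ℂ :=
  piKronecker fun s => vecTensor (ι s) (if s ∈ m then star yVec else yVec)

lemma doubling_apply (m : Finset (Fin n)) (r : ∀ s, Fin 2 × ι s) (i : ∀ s, ι s) :
    doubling ι m r i = (∏ s, (if s ∈ m then star yVec else yVec) (r s).1) *
      (1 : Matrix (∀ s, ι s) (∀ s, ι s) ℂ) (fun s => (r s).2) i := by
  rw [← piKronecker_one]
  simp only [doubling, piKronecker, vecTensor, of_apply, Finset.prod_mul_distrib]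

variable [∀ s, Fintype (ι s)]

lemma doubling_isometry (m : Finset (Fin n)) : (doubling ι m)ᴴ * doubling ι m = 1 := by
  rw [doubling, piKronecker_conjTranspose, piKronecker_mul, ← piKronecker_one]
  congr! 2 with s
  rw [vecTensor_conjTranspose, vecTensor_transpose_mul]
  split_ifs
  · rw [star_star, dotProduct_comm, star_yVec_dotProduct_yVec, one_smul]
  · rw [star_yVec_dotProduct_yVec, one_smul]

lemma doubling_isotropic [NeZero n] (m : Finset (Fin n)) :
    (doubling ι m)ᵀ * doubling ι m = 0 := by
  rw [doubling, piKronecker_transpose, piKronecker_mul, ← piKronecker_zero]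
  congr! 2 with s
  rw [vecTensor_transpose_mul]
  split_ifs
  · rw [star_dotProduct_star, yVec_dotProduct_yVec, star_zero, zero_smul]
  · rw [yVec_dotProduct_yVec, zero_smul]

lemma npTensor_obsEmbed_mul_doubling (A : ∀ s, Matrix (ι s) (ι s) ℂ) :
    npTensor (fun s => obsEmbed (A s)) * doubling ι ∅ = doubling ι ∅ * npTensor A := by
  change piKronecker (fun s => obsEmbed (A s)) * doubling ι ∅ = doubling ι ∅ * piKronecker A
  simp [doubling, piKronecker_mul, obsEmbed_mul_vecTensor]

lemma doubling_mul_mul_conjTranspose_apply (m : Finset (Fin n))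
    (A : Matrix (∀ s, ι s) (∀ s, ι s) ℂ) (r c : ∀ s, Fin 2 × ι s) :
    (doubling ι m * A * (doubling ι m)ᴴ) r c =
      (∏ s, (2⁻¹ : ℂ) * oneMinusIY (if s ∈ m then (c s).1 else (r s).1)
        (if s ∈ m then (r s).1 else (c s).1)) * A (fun s => (r s).2) (fun s => (c s).2) := by
  have hlocal (s : Fin n) : (2⁻¹ : ℂ) * oneMinusIY (if s ∈ m then (c s).1 else (r s).1)
      (if s ∈ m then (r s).1 else (c s).1) =
      (if s ∈ m then star yVec else yVec) (r s).1 *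
        star ((if s ∈ m then star yVec else yVec) (c s).1) := by
    rw [← yVec_mul_star]
    split_ifs <;> simp [mul_comm]
  simp only [hlocal, Finset.prod_mul_distrib, ← star_prod]
  simp only [mul_apply, doubling_apply, one_apply, mul_ite, mul_one, mul_zero, ite_mul, zero_mul,
    Finset.sum_ite_eq, Finset.mem_univ, ↓reduceIte, conjTranspose_apply, apply_ite star, star_prod,
    RCLike.star_def, star_zero]
  ring

theorem ptm_stateEmbed (m : Finset (Fin n)) (ρ : Matrix (∀ s, ι s) (∀ s, ι s) ℂ) :
    ptm m (stateEmbed ρ) = rePart (doubling ι m * ptm m ρ * (doubling ι m)ᴴ) := by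
  ext r c
  have hscale : (2⁻¹ : ℂ) ^ n = (((2 : ℝ) ^ n)⁻¹ : ℝ) := by simp
  rw [rePart, map_apply, doubling_mul_mul_conjTranspose_apply, Finset.prod_mul_distrib,
    Finset.prod_const, Finset.card_fin, hscale, mul_assoc, Complex.re_ofReal_mul]
  simp only [ptm, stateEmbed, apply_ite Prod.fst, apply_ite Prod.snd]

lemma stateEmbed_eq_rePart (ρ : Matrix (∀ s, ι s) (∀ s, ι s) ℂ) :
    stateEmbed ρ = rePart (doubling ι ∅ * ρ * (doubling ι ∅)ᴴ) := by
  simpa only [ptm_empty] using ptm_stateEmbed ∅ ρ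

omit [∀ s, DecidableEq (ι s)] [∀ s, Fintype (ι s)] in
lemma stateEmbed_posSemidef [∀ s, Finite (ι s)] {ρ : Matrix (∀ s, ι s) (∀ s, ι s) ℂ}
    (hρ : ρ.PosSemidef) : (stateEmbed ρ).PosSemidef := by
  classical
  have (s : Fin n) := Fintype.ofFinite (ι s)
  rw [stateEmbed_eq_rePart]
  exact rePart_posSemidef (hρ.mul_mul_conjTranspose_same _)

lemma trace_stateEmbed_mul (ρ : Matrix (∀ s, ι s) (∀ s, ι s) ℂ)
    {N : Matrix (∀ s, Fin 2 × ι s) (∀ s, Fin 2 × ι s) ℂ} (hN : ∀ r c, (N r c).im = 0)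
    {K : Matrix (∀ s, ι s) (∀ s, ι s) ℂ} (hNK : N * doubling ι ∅ = doubling ι ∅ * K) :
    trace (stateEmbed ρ * N) = ((trace (ρ * K)).re : ℂ) := by
  rw [stateEmbed_eq_rePart, trace_rePart_mul _ hN]
  congr 2
  calc trace (doubling ι ∅ * ρ * (doubling ι ∅)ᴴ * N)
      = trace (ρ * ((doubling ι ∅)ᴴ * (N * doubling ι ∅))) := by
        rw [Matrix.mul_assoc, Matrix.mul_assoc, trace_mul_comm]
        simp only [Matrix.mul_assoc]
    _ = trace (ρ * K) := by
        rw [hNK, ← Matrix.mul_assoc _ _ K, doubling_isometry, Matrix.one_mul]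

omit [∀ s, DecidableEq (ι s)] in
lemma trace_stateEmbed (ρ : Matrix (∀ s, ι s) (∀ s, ι s) ℂ) :
    trace (stateEmbed ρ) = ((trace ρ).re : ℂ) := by
  classical
  simpa using trace_stateEmbed_mul ρ (N := 1) (K := 1)
    (fun r c => by rw [one_apply]; split_ifs <;> simp) (by simp)

omit [∀ s, DecidableEq (ι s)] in
lemma trace_stateEmbed_mul_npTensor_obsEmbed (ρ : Matrix (∀ s, ι s) (∀ s, ι s) ℂ)
    (A : ∀ s, Matrix (ι s) (ι s) ℂ) :
    trace (stateEmbed ρ * npTensor fun s => obsEmbed (A s)) =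
      ((trace (ρ * npTensor A)).re : ℂ) := by
  classical
  exact trace_stateEmbed_mul ρ (piKronecker_im_eq_zero fun s => obsEmbed_im (A s))
    (npTensor_obsEmbed_mul_doubling A)

theorem negEig_ptm_stateEmbed (m : Finset (Fin n)) {ρ : Matrix (∀ s, ι s) (∀ s, ι s) ℂ}
    (hρ : ρ.IsHermitian) : negEig (ptm m (stateEmbed ρ)) = negEig (ptm m ρ) := by
  have hm := ptm_isHermitian m hρ
  rw [ptm_stateEmbed]
  obtain rfl | hn := eq_or_ne n 0
  · -- `doubling` is not isotropic here, but all the matrices are `1 × 1`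
    rw [rePart_eq_self_of_subsingleton (isHermitian_mul_mul_conjTranspose _ hm),
      negEig_isometry_conj hm (doubling_isometry m)]
  · have : NeZero n := ⟨hn⟩
    exact negEig_rePart_isometry_conj hm (doubling_isometry m) (doubling_isotropic m)

end StateEmbed

/-- Proposition 1: any n-partite probability distribution with a quantum
representation also has a real quantum representation on the doubled spaces, with real
symmetric state and projections, reproducing the same distribution and having the same
negativity across every bipartition. -/
theorem real_quantum_representation
    {n : ℕ} {ι X O : Fin n → Type*}
    [∀ s, Fintype (ι s)] [∀ s, Nonempty (ι s)] [∀ s, DecidableEq (ι s)]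
    [∀ s, Fintype (O s)]
    (ρ : Matrix ((s : Fin n) → ι s) ((s : Fin n) → ι s) ℂ)
    (hρ : ρ.PosSemidef) (htr : Matrix.trace ρ = 1)
    (M : (s : Fin n) → X s → O s → Matrix (ι s) (ι s) ℂ)
    (hMh : ∀ s x a, (M s x a).IsHermitian)
    (hMi : ∀ s x a, M s x a * M s x a = M s x a)
    (hMs : ∀ s x, ∑ a, M s x a = 1)
    (P : ((s : Fin n) → O s) → ((s : Fin n) → X s) → ℝ)
    (hP : ∀ a x, (P a x : ℂ) = Matrix.trace (ρ * npTensor (fun s => M s (x s) (a s)))) :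
    ∃ (ρ' : Matrix ((s : Fin n) → Fin 2 × ι s) ((s : Fin n) → Fin 2 × ι s) ℂ)
      (M' : (s : Fin n) → X s → O s → Matrix (Fin 2 × ι s) (Fin 2 × ι s) ℂ),
      ρ'.PosSemidef ∧ Matrix.trace ρ' = 1 ∧
      (∀ p q, (ρ' p q).im = 0) ∧ ρ'ᵀ = ρ' ∧
      (∀ s x a, (M' s x a).IsHermitian ∧ M' s x a * M' s x a = M' s x a ∧
        (∀ p q, ((M' s x a) p q).im = 0) ∧ (M' s x a)ᵀ = M' s x a) ∧
      (∀ s x, ∑ a, M' s x a = 1) ∧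
      (∀ a x, (P a x : ℂ) = Matrix.trace (ρ' * npTensor (fun s => M' s (x s) (a s)))) ∧
      (∀ m : Finset (Fin n), negEig (ptm m ρ') = negEig (ptm m ρ)) := by
  refine ⟨stateEmbed ρ, fun s x a => obsEmbed (M s x a), stateEmbed_posSemidef hρ, ?_,
    stateEmbed_im ρ, transpose_eq_of_im_eq_zero (stateEmbed_posSemidef hρ).isHermitian
      (stateEmbed_im ρ), fun s x a => ?_, fun s x => ?_, fun a x => ?_,
    fun m => negEig_ptm_stateEmbed m hρ.isHermitian⟩
  · rw [trace_stateEmbed, htr, Complex.one_re, Complex.ofReal_one]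
  · have hherm := obsEmbed_isHermitian (hMh s x a)
    have hreal := obsEmbed_im (M s x a)
    exact ⟨hherm, by rw [← obsEmbed_mul, hMi], hreal, transpose_eq_of_im_eq_zero hherm hreal⟩
  · rw [← obsEmbed_sum, hMs, obsEmbed_one]
  · rw [trace_stateEmbed_mul_npTensor_obsEmbed, ← hP, Complex.ofReal_re]
end

section
/- Device-independent negativity bound for the CHSH inequality: let ρ be a bipartite quantum state on ι_A × ι_B (finite nonempty types of arbitrary size), let A₁, A₂ be dichotomic observables on ι_A and B₁, B₂ dichotomic observables on ι_B, and let v be the CHSH value of ρ with these observables. Then the negativity of ρ satisfies N(ρ) ≥ (v − 2)/(4·√2 − 4). -/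
open Matrix
open scoped Kronecker ComplexOrder

/-!
If `0 ≤ W ≤ c`, then splitting `ρ^{T_A}` into positive and negative parts gives
`-c N(ρ) ≤ tr (ρ^{T_A} W) = tr (ρ W^{T_A})`. Hence it suffices to find such a `W` with `c = 4√2 - 4`
and `W^{T_A} ≤ 2 - X`, where `X` is the CHSH operator. Let `Y` be the CHSH operator of
`A₁ᵀ, A₂ᵀ, B₁, B₂` and `W = 2 (-Y - 2)₊`; Tsirelson's bound `-2√2 ≤ Y` gives `W ≤ c`. With
`C = [A₁, A₂]` and `D = [B₁, B₂]` one has `Y² = 4 + Cᵀ ⊗ D` and `X² = 4 - C ⊗ D`, and `C`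
anticommutes with `A₁` and `A₂`. Partial transposition therefore turns `f(Y² - 4) + Y g(Y² - 4)`
into `f(4 - X²) + X g(X² - 4)`, and `W^{T_A} ≤ 2 - X` becomes a scalar inequality in `X`.
-/

section MatrixOrder

open scoped MatrixOrder

variable {n 𝕜 : Type*} [Fintype n] [RCLike 𝕜]

lemma trace_mul_nonneg {A B : Matrix n n 𝕜} (hA : 0 ≤ A) (hB : 0 ≤ B) : 0 ≤ trace (A * B) := by
  classical
  obtain ⟨S, rfl⟩ := CStarAlgebra.nonneg_iff_eq_star_mul_self.mp hB
  rw [← Matrix.mul_assoc, trace_mul_comm, ← Matrix.mul_assoc]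
  exact (hA.posSemidef.mul_mul_conjTranspose_same S).trace_nonneg

lemma trace_mul_le_trace_mul {A B C : Matrix n n 𝕜} (hA : 0 ≤ A) (hBC : B ≤ C) :
    trace (A * B) ≤ trace (A * C) := by
  rw [← sub_nonneg, ← trace_sub, ← Matrix.mul_sub]
  exact trace_mul_nonneg hA (sub_nonneg.mpr hBC)

variable [DecidableEq n]

lemma trace_cfc {A : Matrix n n 𝕜} (hA : A.IsHermitian) (f : ℝ → ℝ) :
    trace (cfc f A) = ∑ i, (f (hA.eigenvalues i) : 𝕜) := by
  rw [hA.cfc_eq, IsHermitian.cfc, Unitary.conjStarAlgAut_apply, trace_mul_cycle,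
    Unitary.coe_star_mul_self, Matrix.one_mul, trace_diagonal]
  rfl

lemma trace_negPart {M : Matrix n n ℂ} (hM : M.IsHermitian) : trace M⁻ = negEig M := by
  have hneg : M⁻ = cfc (fun x : ℝ ↦ x⁻) M := by
    rw [CFC.negPart_def, cfcₙ_eq_cfc]
  rw [hneg, trace_cfc hM, negEig, dif_pos hM, Complex.ofReal_sum]
  simp only [negPart_def, max_comm]
  rfl

lemma neg_mul_negEig_le_trace_mul {M W : Matrix n n ℂ} (hM : M.IsHermitian) {c : ℝ}
    (hW₀ : 0 ≤ W) (hWc : W ≤ algebraMap ℝ _ c) : -(c * negEig M) ≤ (trace (M * W)).re := by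
  have hpos : 0 ≤ trace (M⁺ * W) := trace_mul_nonneg (CFC.posPart_nonneg M) hW₀
  have hneg : trace (M⁻ * W) ≤ c * negEig M :=
    calc trace (M⁻ * W) ≤ trace (M⁻ * algebraMap ℝ _ c) :=
          trace_mul_le_trace_mul (CFC.negPart_nonneg M) hWc
      _ = c * negEig M := by
          rw [← Algebra.commutes, ← Algebra.smul_def, trace_smul, trace_negPart hM,
            Complex.real_smul]
  have hsplit : trace (M * W) = trace (M⁺ * W) - trace (M⁻ * W) := by
    rw [← trace_sub, ← Matrix.sub_mul, CFC.posPart_sub_negPart M hM]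
  have hposRe := (Complex.le_def.mp hpos).1
  have hnegRe := (Complex.le_def.mp hneg).1
  simp only [Complex.zero_re, Complex.re_mul_ofReal, Complex.ofReal_re] at hposRe hnegRe
  rw [hsplit, Complex.sub_re]
  linarith

end MatrixOrder

section FunctionalCalculus

variable {m n 𝕜 : Type*} [Fintype m] [DecidableEq m] [Fintype n] [DecidableEq n] [RCLike 𝕜]

lemma exists_polynomial_cfc_eq_aeval (f : ℝ → ℝ) {M : Matrix m m 𝕜} {N : Matrix n n 𝕜}
    (hM : M.IsHermitian) (hN : N.IsHermitian) :
    ∃ p : Polynomial ℝ, cfc f M = Polynomial.aeval M p ∧ cfc f N = Polynomial.aeval N p := by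
  let nodes : Finset ℝ :=
    M.finite_real_spectrum.toFinset ∪ N.finite_real_spectrum.toFinset
  let p := Lagrange.interpolate nodes id f
  have hp : ∀ x ∈ nodes, f x = p.eval x := fun x hx ↦
    (Lagrange.eval_interpolate_at_node f (Set.injOn_id _) hx).symm
  refine ⟨p, ?_, ?_⟩
  · rw [← cfc_polynomial p M hM]
    exact cfc_congr fun x hx ↦ hp x (by simp [nodes, hx])
  · rw [← cfc_polynomial p N hN]
    exact cfc_congr fun x hx ↦ hp x (by simp [nodes, hx])

lemma map_mul_cfc (L : Matrix m m 𝕜 →ₗ[ℝ] Matrix n n 𝕜) {K M : Matrix m m 𝕜}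
    {K' M' : Matrix n n 𝕜} (hM : M.IsHermitian) (hM' : M'.IsHermitian)
    (hL : ∀ k : ℕ, L (K * M ^ k) = K' * M' ^ k) (f : ℝ → ℝ) :
    L (K * cfc f M) = K' * cfc f M' := by
  obtain ⟨p, hpM, hpM'⟩ := exists_polynomial_cfc_eq_aeval f hM hM'
  simp only [hpM, hpM', Polynomial.aeval_eq_sum_range, Finset.mul_sum, Matrix.mul_smul, map_sum,
    map_smul, hL]

lemma cfc_comp_add_id_mul_comp {H : Matrix n n 𝕜} (hH : H.IsHermitian) (f u g v : ℝ → ℝ) :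
    cfc (fun x ↦ f (u x) + x * g (v x)) H = cfc f (cfc u H) + H * cfc g (cfc v H) := by
  have hcont (φ : ℝ → ℝ) : ContinuousOn φ (spectrum ℝ H) := H.finite_real_spectrum.continuousOn φ
  have hcomp (φ ψ : ℝ → ℝ) : cfc (fun x ↦ φ (ψ x)) H = cfc φ (cfc ψ H) :=
    cfc_comp' φ ψ H ((H.finite_real_spectrum.image ψ).continuousOn φ) (hcont ψ) hH
  rw [cfc_add _ _ _ (hcont _) (hcont _), cfc_mul _ _ _ (hcont _) (hcont _), hcomp f u, hcomp g v,
    cfc_id' ℝ H hH.isSelfAdjoint]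

end FunctionalCalculus

section Kronecker

variable {R m n : Type*}

lemma neg_kronecker [NonUnitalNonAssocRing R] (A : Matrix m m R) (B : Matrix n n R) :
    (-A) ⊗ₖ B = -(A ⊗ₖ B) := by
  ext i j
  simp only [kroneckerMap_apply, Matrix.neg_apply, neg_mul]

lemma kronecker_pow [CommSemiring R] [Fintype m] [Fintype n] [DecidableEq m] [DecidableEq n]
    (A : Matrix m m R) (B : Matrix n n R) (k : ℕ) : (A ⊗ₖ B) ^ k = (A ^ k) ⊗ₖ (B ^ k) := by
  induction k with
  | zero => simp only [pow_zero, one_kronecker_one]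
  | succ k ih => rw [pow_succ, ih, ← mul_kronecker_mul, pow_succ, pow_succ]

end Kronecker

section PartialTranspose

variable {ιA ιB : Type*}

lemma isHermitian_ptA {ρ : Matrix (ιA × ιB) (ιA × ιB) ℂ} (hρ : ρ.IsHermitian) :
    (ptA ρ).IsHermitian :=
  IsHermitian.ext fun p q ↦ hρ.apply (q.1, p.2) (p.1, q.2)

/-- The partial transpose as a real-linear map. -/
@[simps]
def ptALinear : Matrix (ιA × ιB) (ιA × ιB) ℂ →ₗ[ℝ] Matrix (ιA × ιB) (ιA × ιB) ℂ where
  toFun := ptA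
  map_add' _ _ := rfl
  map_smul' _ _ := rfl

lemma ptA_kronecker (A : Matrix ιA ιA ℂ) (B : Matrix ιB ιB ℂ) : ptA (A ⊗ₖ B) = Aᵀ ⊗ₖ B := rfl

variable [Fintype ιA] [Fintype ιB]

lemma trace_ptA_mul (ρ W : Matrix (ιA × ιB) (ιA × ιB) ℂ) :
    trace (ptA ρ * W) = trace (ρ * ptA W) := by
  simp only [trace, diag_apply, Matrix.mul_apply, ptA, ← Finset.univ_product_univ,
    ← Finset.sum_product']
  refine Finset.sum_nbij' (fun x ↦ ((x.2.1, x.1.2), (x.1.1, x.2.2)))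
    (fun x ↦ ((x.2.1, x.1.2), (x.1.1, x.2.2))) ?_ ?_ ?_ ?_ ?_ <;> simp

variable [DecidableEq ιA] [DecidableEq ιB]

lemma ptA_transpose_kronecker_mul_cfc {A C C' : Matrix ιA ιA ℂ} (B : Matrix ιB ιB ℂ)
    {D : Matrix ιB ιB ℂ} (hAC : SemiconjBy A C' C) (hCD : (Cᵀ ⊗ₖ D).IsHermitian)
    (hCD' : (C' ⊗ₖ D).IsHermitian) (f : ℝ → ℝ) :
    ptA (Aᵀ ⊗ₖ B * cfc f (Cᵀ ⊗ₖ D)) = A ⊗ₖ B * cfc f (C' ⊗ₖ D) := by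
  refine map_mul_cfc ptALinear hCD hCD' (fun k ↦ ?_) f
  rw [ptALinear_apply, kronecker_pow, kronecker_pow, ← mul_kronecker_mul, ptA_kronecker,
    transpose_mul, ← transpose_pow, transpose_transpose, transpose_transpose,
    ← (hAC.pow_right k).eq, mul_kronecker_mul]

lemma ptA_cfc_transpose_kronecker {C : Matrix ιA ιA ℂ} {D : Matrix ιB ιB ℂ}
    (hCD : (Cᵀ ⊗ₖ D).IsHermitian) (hCD' : (C ⊗ₖ D).IsHermitian) (f : ℝ → ℝ) :
    ptA (cfc f (Cᵀ ⊗ₖ D)) = cfc f (C ⊗ₖ D) := by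
  simpa only [transpose_one, one_kronecker_one, Matrix.one_mul] using
    ptA_transpose_kronecker_mul_cfc 1 (SemiconjBy.one_left C) hCD hCD' f

end PartialTranspose

section Commutator

variable {R : Type*} [Ring R] {a b : R}

lemma semiconjBy_neg_lie_left (ha : a * a = 1) : SemiconjBy a (-⁅a, b⁆) ⁅a, b⁆ := by
  rw [SemiconjBy, Ring.lie_def, neg_sub, mul_sub, sub_mul, ← mul_assoc a a, ha, mul_assoc b, ha,
    mul_assoc, mul_one, one_mul]

lemma semiconjBy_neg_lie_right (hb : b * b = 1) : SemiconjBy b (-⁅a, b⁆) ⁅a, b⁆ := by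
  rw [SemiconjBy, Ring.lie_def, neg_sub, mul_sub, sub_mul, ← mul_assoc b b, hb, mul_assoc a, hb,
    mul_assoc, mul_one, one_mul]

end Commutator

section Observables

/-- A dichotomic observable: a Hermitian matrix squaring to the identity, that is, a measurement
with outcomes `±1`. -/
structure IsDichotomic {ι : Type*} [Fintype ι] [DecidableEq ι] (A : Matrix ι ι ℂ) : Prop where
  isHermitian : A.IsHermitian
  mul_self : A * A = 1

variable {ι : Type*} [Fintype ι] [DecidableEq ι] {A : Matrix ι ι ℂ}

lemma IsDichotomic.transpose (hA : IsDichotomic A) : IsDichotomic Aᵀ where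
  isHermitian := hA.isHermitian.transpose
  mul_self := by rw [← transpose_mul, hA.mul_self, transpose_one]

lemma IsDichotomic.neg (hA : IsDichotomic A) : IsDichotomic (-A) where
  isHermitian := hA.isHermitian.neg
  mul_self := by rw [neg_mul_neg, hA.mul_self]

end Observables

section CHSHOperator

variable {R ιA ιB : Type*} [CommRing R]

/-- The CHSH operator, whose expectation in a state is the CHSH value. -/
def chshOp (A₁ A₂ : Matrix ιA ιA R) (B₁ B₂ : Matrix ιB ιB R) : Matrix (ιA × ιB) (ιA × ιB) R :=
  A₁ ⊗ₖ B₁ + A₁ ⊗ₖ B₂ + A₂ ⊗ₖ B₁ - A₂ ⊗ₖ B₂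

lemma chshOp_neg (A₁ A₂ : Matrix ιA ιA R) (B₁ B₂ : Matrix ιB ιB R) :
    chshOp (-A₁) (-A₂) B₁ B₂ = -chshOp A₁ A₂ B₁ B₂ := by
  simp only [chshOp, neg_kronecker]
  abel

lemma isHermitian_chshOp [StarRing R] {A₁ A₂ : Matrix ιA ιA R} {B₁ B₂ : Matrix ιB ιB R}
    (hA₁ : A₁.IsHermitian) (hA₂ : A₂.IsHermitian) (hB₁ : B₁.IsHermitian) (hB₂ : B₂.IsHermitian) :
    (chshOp A₁ A₂ B₁ B₂).IsHermitian := by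
  simp only [IsHermitian, chshOp, conjTranspose_add, conjTranspose_sub, conjTranspose_kronecker,
    hA₁.eq, hA₂.eq, hB₁.eq, hB₂.eq]

variable [Fintype ιA] [Fintype ιB] [DecidableEq ιA] [DecidableEq ιB]

lemma chshOp_sq {A₁ A₂ : Matrix ιA ιA R} {B₁ B₂ : Matrix ιB ιB R} (hA₁ : A₁ * A₁ = 1)
    (hA₂ : A₂ * A₂ = 1) (hB₁ : B₁ * B₁ = 1) (hB₂ : B₂ * B₂ = 1) :
    chshOp A₁ A₂ B₁ B₂ ^ 2 = 4 - ⁅A₁, A₂⁆ ⊗ₖ ⁅B₁, B₂⁆ := by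
  have hlie : ⁅A₁, A₂⁆ ⊗ₖ ⁅B₁, B₂⁆ = (A₁ * A₂) ⊗ₖ (B₁ * B₂) - (A₁ * A₂) ⊗ₖ (B₂ * B₁)
      - (A₂ * A₁) ⊗ₖ (B₁ * B₂) + (A₂ * A₁) ⊗ₖ (B₂ * B₁) := by
    ext i j
    simp only [Ring.lie_def, Matrix.add_apply, Matrix.sub_apply, kroneckerMap_apply]
    ring
  have hfour : (4 : Matrix (ιA × ιB) (ιA × ιB) R) = 1 + 1 + 1 + 1 := by norm_num
  simp only [hlie, hfour, chshOp, pow_two, Matrix.add_mul, Matrix.mul_add, Matrix.sub_mul,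
    Matrix.mul_sub, ← mul_kronecker_mul, hA₁, hA₂, hB₁, hB₂, one_kronecker_one]
  abel

end CHSHOperator

section Tsirelson

open scoped MatrixOrder

variable {ιA ιB : Type*} [Fintype ιA] [Fintype ιB] [DecidableEq ιA] [DecidableEq ιB]
  {A₁ A₂ : Matrix ιA ιA ℂ} {B₁ B₂ : Matrix ιB ιB ℂ}

lemma IsDichotomic.isHermitian_chshOp (hA₁ : IsDichotomic A₁) (hA₂ : IsDichotomic A₂)
    (hB₁ : IsDichotomic B₁) (hB₂ : IsDichotomic B₂) : (chshOp A₁ A₂ B₁ B₂).IsHermitian :=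
  _root_.isHermitian_chshOp hA₁.isHermitian hA₂.isHermitian hB₁.isHermitian hB₂.isHermitian

lemma chshOp_le (hA₁ : IsDichotomic A₁) (hA₂ : IsDichotomic A₂)
    (hB₁ : IsDichotomic B₁) (hB₂ : IsDichotomic B₂) :
    chshOp A₁ A₂ B₁ B₂ ≤ algebraMap ℝ _ (2 * √2) := by
  have htuple : IsCHSHTuple (A₁ ⊗ₖ (1 : Matrix ιB ιB ℂ)) (A₂ ⊗ₖ (1 : Matrix ιB ιB ℂ))
      ((1 : Matrix ιA ιA ℂ) ⊗ₖ B₁) ((1 : Matrix ιA ιA ℂ) ⊗ₖ B₂) := by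
    constructor <;>
      simp only [pow_two, star_eq_conjTranspose, conjTranspose_kronecker, conjTranspose_one,
        ← mul_kronecker_mul, Matrix.mul_one, Matrix.one_mul, one_kronecker_one,
        hA₁.mul_self, hA₂.mul_self, hB₁.mul_self, hB₂.mul_self,
        hA₁.isHermitian.eq, hA₂.isHermitian.eq, hB₁.isHermitian.eq, hB₂.isHermitian.eq]
  have htsirelson := tsirelson_inequality _ _ _ _ htuple
  simp only [← mul_kronecker_mul, Matrix.mul_one, Matrix.one_mul] at htsirelson
  rwa [pow_succ, Real.sq_sqrt zero_le_two, ← Algebra.algebraMap_eq_smul_one] at htsirelson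

lemma neg_le_of_mem_spectrum_chshOp (hA₁ : IsDichotomic A₁) (hA₂ : IsDichotomic A₂)
    (hB₁ : IsDichotomic B₁) (hB₂ : IsDichotomic B₂) {x : ℝ}
    (hx : x ∈ spectrum ℝ (chshOp A₁ A₂ B₁ B₂)) : -(2 * √2) ≤ x := by
  have hneg := (le_algebraMap_iff_spectrum_le
    (hA₁.neg.isHermitian_chshOp hA₂.neg hB₁ hB₂).isSelfAdjoint).mp
    (chshOp_le hA₁.neg hA₂.neg hB₁ hB₂) (-x)
  rw [chshOp_neg, ← spectrum.neg_eq, Set.neg_mem_neg] at hneg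
  exact neg_le.mp (hneg hx)

end Tsirelson

section WitnessProfile

/-- The part of the witness profile `y ↦ 2 * max 0 (-y - 2)` that is even in `y`, written as a
function of `m = y ^ 2 - 4`. -/
noncomputable def witnessEven (m : ℝ) : ℝ := max 0 (√(4 + m) - 2)

/-- The part of the witness profile `y ↦ 2 * max 0 (-y - 2)` that is odd in `y`, divided by `y` and
written as a function of `m = y ^ 2 - 4`. The division by zero at `m = -4` is harmless, the
numerator being zero there. -/
noncomputable def witnessOdd (m : ℝ) : ℝ := -witnessEven m / √(4 + m)

lemma witnessEven_sq_sub_four (y : ℝ) : witnessEven (y ^ 2 - 4) = max 0 (|y| - 2) := by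
  rw [witnessEven, add_sub_cancel, Real.sqrt_sq_eq_abs]

lemma witnessEven_add_mul_witnessOdd (y : ℝ) :
    witnessEven (y ^ 2 - 4) + y * witnessOdd (y ^ 2 - 4) = 2 * max 0 (-y - 2) := by
  rw [witnessOdd, witnessEven_sq_sub_four, add_sub_cancel, Real.sqrt_sq_eq_abs]
  rcases lt_trichotomy y 0 with hy | rfl | hy
  · rw [abs_of_neg hy, mul_div_assoc', div_neg, mul_neg, neg_div, neg_neg,
      mul_div_cancel_left₀ _ hy.ne, two_mul]
  · norm_num
  · rw [abs_of_pos hy, mul_div_cancel₀ _ hy.ne', add_neg_cancel,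
      max_eq_left (by linarith), mul_zero]

lemma witnessEven_of_nonpos {m : ℝ} (hm : m ≤ 0) : witnessEven m = 0 := by
  have hsqrt : √(4 + m) ≤ 2 := (Real.sqrt_le_left zero_le_two).mpr (by linarith)
  rw [witnessEven, max_eq_left (by linarith)]

lemma witnessEven_four_sub_sq_le {x : ℝ} (hx : |x| ≤ 2) : witnessEven (4 - x ^ 2) ≤ 2 - x := by
  have hsq : √(4 + (4 - x ^ 2)) ^ 2 = 8 - x ^ 2 := by
    rw [Real.sq_sqrt (by linarith [sq_le_sq.mpr (hx.trans_eq (abs_two).symm)])]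
    ring
  have hsum : √(4 + (4 - x ^ 2)) + x ≤ 4 := by
    nlinarith [sq_nonneg (√(4 + (4 - x ^ 2)) - x)]
  exact max_le (by linarith [le_abs_self x]) (by linarith)

lemma witnessEven_add_mul_witnessOdd_le (x : ℝ) :
    witnessEven (4 - x ^ 2) + x * witnessOdd (x ^ 2 - 4) ≤ 2 - x := by
  rcases le_total |x| 2 with hx | hx
  · have hsq : x ^ 2 - 4 ≤ 0 := by nlinarith [sq_abs x, abs_nonneg x]
    rw [witnessOdd, witnessEven_of_nonpos hsq, neg_zero, zero_div, mul_zero, add_zero]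
    exact witnessEven_four_sub_sq_le hx
  · have hsq : 4 - x ^ 2 ≤ 0 := by nlinarith [sq_abs x]
    have hprofile := witnessEven_add_mul_witnessOdd x
    have hmax : 2 * max 0 (-x - 2) ≤ |x| - x := by
      rw [mul_max_of_nonneg _ _ zero_le_two]
      exact max_le (by linarith [le_abs_self x]) (by linarith [neg_le_abs x])
    rw [witnessEven_sq_sub_four, max_eq_right (sub_nonneg.mpr hx)] at hprofile
    rw [witnessEven_of_nonpos hsq]
    linarith

end WitnessProfile

section Witness

open scoped MatrixOrder

variable {ιA ιB : Type*} [Fintype ιA] [Fintype ιB] [DecidableEq ιA] [DecidableEq ιB]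
  {A₁ A₂ : Matrix ιA ιA ℂ} {B₁ B₂ : Matrix ιB ιB ℂ}

/-- Twice the negative part of `Y + 2`, where `Y` is the CHSH operator of the transposed
observables on the first factor; it witnesses negativity through its partial transpose. -/
noncomputable def chshWitness (A₁ A₂ : Matrix ιA ιA ℂ) (B₁ B₂ : Matrix ιB ιB ℂ) :
    Matrix (ιA × ιB) (ιA × ιB) ℂ :=
  cfc (fun y : ℝ ↦ 2 * max 0 (-y - 2)) (chshOp A₁ᵀ A₂ᵀ B₁ B₂)

lemma chshWitness_nonneg (A₁ A₂ : Matrix ιA ιA ℂ) (B₁ B₂ : Matrix ιB ιB ℂ) :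
    0 ≤ chshWitness A₁ A₂ B₁ B₂ :=
  cfc_nonneg fun _ _ ↦ by positivity

lemma chshWitness_le (hA₁ : IsDichotomic A₁) (hA₂ : IsDichotomic A₂)
    (hB₁ : IsDichotomic B₁) (hB₂ : IsDichotomic B₂) :
    chshWitness A₁ A₂ B₁ B₂ ≤ algebraMap ℝ _ (4 * √2 - 4) := by
  refine cfc_le_algebraMap _ _ _ (fun y hy ↦ ?_)
    (ha := hA₁.transpose.isHermitian_chshOp hA₂.transpose hB₁ hB₂)
  have hlo := neg_le_of_mem_spectrum_chshOp hA₁.transpose hA₂.transpose hB₁ hB₂ hy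
  have hmax : max 0 (-y - 2) ≤ 2 * √2 - 2 :=
    max_le (by linarith [Real.one_lt_sqrt_two]) (by linarith)
  linarith

lemma cfc_four_sub_sq_chshOp (hA₁ : IsDichotomic A₁) (hA₂ : IsDichotomic A₂)
    (hB₁ : IsDichotomic B₁) (hB₂ : IsDichotomic B₂) :
    cfc (fun x : ℝ ↦ 4 - x ^ 2) (chshOp A₁ A₂ B₁ B₂) = ⁅A₁, A₂⁆ ⊗ₖ ⁅B₁, B₂⁆ := by
  have hX := (hA₁.isHermitian_chshOp hA₂ hB₁ hB₂).isSelfAdjoint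
  rw [cfc_sub (fun _ ↦ (4 : ℝ)) (fun x ↦ x ^ 2), cfc_const (4 : ℝ) _ hX, cfc_pow_id _ 2 hX,
    chshOp_sq hA₁.mul_self hA₂.mul_self hB₁.mul_self hB₂.mul_self, map_ofNat, sub_sub_cancel]

lemma cfc_sq_sub_four_chshOp (hA₁ : IsDichotomic A₁) (hA₂ : IsDichotomic A₂)
    (hB₁ : IsDichotomic B₁) (hB₂ : IsDichotomic B₂) :
    cfc (fun x : ℝ ↦ x ^ 2 - 4) (chshOp A₁ A₂ B₁ B₂) = (-⁅A₁, A₂⁆) ⊗ₖ ⁅B₁, B₂⁆ := by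
  simp only [neg_kronecker, ← cfc_four_sub_sq_chshOp hA₁ hA₂ hB₁ hB₂, ← cfc_neg, neg_sub]

lemma cfc_sq_sub_four_chshOp_transpose (hA₁ : IsDichotomic A₁) (hA₂ : IsDichotomic A₂)
    (hB₁ : IsDichotomic B₁) (hB₂ : IsDichotomic B₂) :
    cfc (fun y : ℝ ↦ y ^ 2 - 4) (chshOp A₁ᵀ A₂ᵀ B₁ B₂) = ⁅A₁, A₂⁆ᵀ ⊗ₖ ⁅B₁, B₂⁆ := by
  have hlie : -⁅A₁ᵀ, A₂ᵀ⁆ = ⁅A₁, A₂⁆ᵀ := by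
    simp only [Ring.lie_def, transpose_sub, transpose_mul, neg_sub]
  rw [cfc_sq_sub_four_chshOp hA₁.transpose hA₂.transpose hB₁ hB₂, hlie]

lemma ptA_chshWitness (hA₁ : IsDichotomic A₁) (hA₂ : IsDichotomic A₂)
    (hB₁ : IsDichotomic B₁) (hB₂ : IsDichotomic B₂) :
    ptA (chshWitness A₁ A₂ B₁ B₂) =
      cfc (fun x ↦ witnessEven (4 - x ^ 2) + x * witnessOdd (x ^ 2 - 4))
        (chshOp A₁ A₂ B₁ B₂) := by
  have hC := cfc_four_sub_sq_chshOp hA₁ hA₂ hB₁ hB₂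
  have hC_neg := cfc_sq_sub_four_chshOp hA₁ hA₂ hB₁ hB₂
  have hC_transpose := cfc_sq_sub_four_chshOp_transpose hA₁ hA₂ hB₁ hB₂
  have hcfc {f : ℝ → ℝ} {H K : Matrix (ιA × ιB) (ιA × ιB) ℂ} (h : cfc f H = K) : K.IsHermitian :=
    h ▸ cfc_predicate f H
  have hEven := ptA_cfc_transpose_kronecker (hcfc hC_transpose) (hcfc hC) witnessEven
  have hOdd₁ (B : Matrix ιB ιB ℂ) := ptA_transpose_kronecker_mul_cfc B
    (semiconjBy_neg_lie_left hA₁.mul_self) (hcfc hC_transpose) (hcfc hC_neg) witnessOdd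
  have hOdd₂ (B : Matrix ιB ιB ℂ) := ptA_transpose_kronecker_mul_cfc B
    (semiconjBy_neg_lie_right hA₂.mul_self) (hcfc hC_transpose) (hcfc hC_neg) witnessOdd
  simp only [chshWitness, ← witnessEven_add_mul_witnessOdd]
  rw [cfc_comp_add_id_mul_comp (hA₁.transpose.isHermitian_chshOp hA₂.transpose hB₁ hB₂),
    cfc_comp_add_id_mul_comp (hA₁.isHermitian_chshOp hA₂ hB₁ hB₂), hC, hC_neg, hC_transpose]
  simp only [← ptALinear_apply] at hEven hOdd₁ hOdd₂ ⊢
  simp only [chshOp, Matrix.add_mul, Matrix.sub_mul, map_add, map_sub, hEven, hOdd₁, hOdd₂]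

lemma ptA_chshWitness_le (hA₁ : IsDichotomic A₁) (hA₂ : IsDichotomic A₂)
    (hB₁ : IsDichotomic B₁) (hB₂ : IsDichotomic B₂) :
    ptA (chshWitness A₁ A₂ B₁ B₂) ≤ 2 - chshOp A₁ A₂ B₁ B₂ := by
  have hX := (hA₁.isHermitian_chshOp hA₂ hB₁ hB₂).isSelfAdjoint
  calc ptA (chshWitness A₁ A₂ B₁ B₂)
      ≤ cfc (fun x : ℝ ↦ 2 - x) (chshOp A₁ A₂ B₁ B₂) := by
        rw [ptA_chshWitness hA₁ hA₂ hB₁ hB₂]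
        exact cfc_mono (fun x _ ↦ witnessEven_add_mul_witnessOdd_le x)
          (Matrix.finite_real_spectrum.continuousOn _)
    _ = 2 - chshOp A₁ A₂ B₁ B₂ := by
        rw [cfc_sub (fun _ ↦ (2 : ℝ)) (fun x ↦ x), cfc_const (2 : ℝ) _ hX, cfc_id' ℝ _ hX,
          map_ofNat]

lemma re_trace_mul_chshOp_le (hA₁ : IsDichotomic A₁) (hA₂ : IsDichotomic A₂)
    (hB₁ : IsDichotomic B₁) (hB₂ : IsDichotomic B₂) {ρ : Matrix (ιA × ιB) (ιA × ιB) ℂ}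
    (hρ : ρ.PosSemidef) :
    (trace (ρ * chshOp A₁ A₂ B₁ B₂)).re ≤
      2 * (trace ρ).re + (4 * √2 - 4) * negEig (ptA ρ) := by
  have hwitness := neg_mul_negEig_le_trace_mul (isHermitian_ptA hρ.isHermitian)
    (chshWitness_nonneg A₁ A₂ B₁ B₂) (chshWitness_le hA₁ hA₂ hB₁ hB₂)
  have hle := (Complex.le_def.mp (trace_mul_le_trace_mul hρ.nonneg
    (ptA_chshWitness_le hA₁ hA₂ hB₁ hB₂))).1
  rw [trace_ptA_mul] at hwitness
  rw [Matrix.mul_sub, mul_two, trace_sub, trace_add, Complex.sub_re, Complex.add_re] at hle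
  linarith

end Witness

/-- device-independent negativity bound for CHSH. Any bipartite quantum
state attaining CHSH value v has negativity at least (v - 2)/(4√2 - 4). -/
theorem chsh_negativity_bound
    {ιA ιB : Type*} [Fintype ιA] [Fintype ιB] [Nonempty ιA] [Nonempty ιB]
    [DecidableEq ιA] [DecidableEq ιB]
    (ρ : Matrix (ιA × ιB) (ιA × ιB) ℂ) (hρ : ρ.PosSemidef) (htr : Matrix.trace ρ = 1)
    (A₁ A₂ : Matrix ιA ιA ℂ) (B₁ B₂ : Matrix ιB ιB ℂ)
    (hA₁ : A₁.IsHermitian) (hA₂ : A₂.IsHermitian)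
    (hB₁ : B₁.IsHermitian) (hB₂ : B₂.IsHermitian)
    (hA₁d : A₁ * A₁ = 1) (hA₂d : A₂ * A₂ = 1) (hB₁d : B₁ * B₁ = 1) (hB₂d : B₂ * B₂ = 1)
    (v : ℝ)
    (hv : v = (Matrix.trace (ρ * (A₁ ⊗ₖ B₁ + A₁ ⊗ₖ B₂ + A₂ ⊗ₖ B₁ - A₂ ⊗ₖ B₂))).re) :
    negEig (ptA ρ) ≥ (v - 2) / (4 * Real.sqrt 2 - 4) := by
  have hbound : v ≤ 2 * (trace ρ).re + (4 * √2 - 4) * negEig (ptA ρ) :=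
    hv.trans_le (re_trace_mul_chshOp_le ⟨hA₁, hA₁d⟩ ⟨hA₂, hA₂d⟩ ⟨hB₁, hB₁d⟩ ⟨hB₂, hB₂d⟩ hρ)
  rw [htr, Complex.one_re] at hbound
  rw [ge_iff_le, div_le_iff₀ (by linarith [Real.one_lt_sqrt_two])]
  linarith
end
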